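/- Let n ≥ 2 and let Q_{R̄} ⊆ ℝ^{n+1} be a parabolic cylinder. Assume X ⊆ Y ⊆ Q_{R̄} are measurable sets and 0 < δ < 1 are such that: (i) |X| < δ |Q_{R̄}|; and (ii) for all (x,t) ∈ Q_{R̄} and all ρ ∈ (0, R̄], if |X ∩ Q_ρ(x,t)| ≥ δ |Q_ρ(x,t)| then Q_ρ(x,t) ∩ Q_{R̄} ⊆ Y. Then |X| ≤ c₃ δ |Y| for a constant c₃ depending only on n. -/

import Mathlib

open MeasureTheory Set ENNReal

/-- The (backward) parabolic cylinder `Q_R(x₀,t₀) = B(x₀,R) × (t₀ - R², t₀) ⊆ ℝⁿ × ℝ`. -/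
def parabolicCylinder (n : ℕ) (x₀ : EuclideanSpace ℝ (Fin n)) (t₀ R : ℝ) :
    Set (EuclideanSpace ℝ (Fin n) × ℝ) :=
  (Metric.ball x₀ R) ×ˢ (Set.Ioo (t₀ - R ^ 2) t₀)

/-- The real line with the metric `|t - s|^(1/2)`. -/
abbrev SnowLine : Type := Metric.Snowflaking ℝ (1 / 2) (by norm_num) (by norm_num)

noncomputable instance snowLineMeasurableSpace : MeasurableSpace SnowLine := borel SnowLine

instance snowLineBorelSpace : BorelSpace SnowLine := ⟨rfl⟩

/-- The identity from space-time to space-time with its parabolic metric. -/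
noncomputable def toParabolic (n : ℕ) :
    EuclideanSpace ℝ (Fin n) × ℝ ≃ₜ EuclideanSpace ℝ (Fin n) × SnowLine :=
  (Homeomorph.refl _).prodCongr Metric.Snowflaking.homeomorph.symm

lemma toParabolic_preimage_closedBall (n : ℕ) (x : EuclideanSpace ℝ (Fin n)) (t r : ℝ)
    (hr : 0 ≤ r) :
    toParabolic n ⁻¹' Metric.closedBall (toParabolic n (x, t)) r =
      Metric.closedBall x r ×ˢ Icc (t - r ^ 2) (t + r ^ 2) := by
  ext ⟨y, s⟩
  change max (dist y x) (dist (Metric.Snowflaking.toSnowflaking s : SnowLine)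
    (Metric.Snowflaking.toSnowflaking t)) ≤ r ↔ dist y x ≤ r ∧ (t - r ^ 2 ≤ s ∧ s ≤ t + r ^ 2)
  rw [max_le_iff, Metric.Snowflaking.dist_toSnowflaking_toSnowflaking]
  refine and_congr Iff.rfl ?_
  rw [← Real.sqrt_eq_rpow, Real.sqrt_le_left hr, Real.dist_eq, abs_le]
  constructor <;> rintro ⟨h1, h2⟩ <;> constructor <;> linarith

lemma volume_closed_cyl (n : ℕ) (x : EuclideanSpace ℝ (Fin n)) (t r : ℝ) (hr : 0 < r) :
    volume (Metric.closedBall x r ×ˢ Icc (t - r ^ 2) (t + r ^ 2)) =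
      2 * (ENNReal.ofReal (r ^ (n + 2)) *
        volume (Metric.ball (0 : EuclideanSpace ℝ (Fin n)) 1)) := by
  rw [Measure.volume_eq_prod, Measure.prod_prod, Measure.addHaar_closedBall _ _ hr.le,
    Real.volume_Icc, finrank_euclideanSpace_fin, pow_add, ENNReal.ofReal_mul (by positivity),
    show t + r ^ 2 - (t - r ^ 2) = 2 * r ^ 2 by ring, ENNReal.ofReal_mul (by positivity)]
  simp only [ENNReal.ofReal_ofNat]
  ring

lemma volume_cyl (n : ℕ) (x : EuclideanSpace ℝ (Fin n)) (t r : ℝ) (hr : 0 < r) :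
    volume (parabolicCylinder n x t r) =
      ENNReal.ofReal (r ^ (n + 2)) *
        volume (Metric.ball (0 : EuclideanSpace ℝ (Fin n)) 1) := by
  rw [parabolicCylinder, Measure.volume_eq_prod, Measure.prod_prod,
    Measure.addHaar_ball_of_pos _ _ hr,
    Real.volume_Ioo, finrank_euclideanSpace_fin, pow_add, ENNReal.ofReal_mul (by positivity),
    show t - (t - r ^ 2) = r ^ 2 by ring]
  ring

lemma volume_cyl_ne_top (n : ℕ) (x : EuclideanSpace ℝ (Fin n)) (t r : ℝ) (hr : 0 < r) :
    volume (parabolicCylinder n x t r) ≠ ∞ := by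
  rw [volume_cyl n x t r hr]
  exact ENNReal.mul_ne_top ENNReal.ofReal_ne_top measure_ball_lt_top.ne

lemma measurableSet_cyl (n : ℕ) (x : EuclideanSpace ℝ (Fin n)) (t r : ℝ) :
    MeasurableSet (parabolicCylinder n x t r) :=
  Metric.isOpen_ball.measurableSet.prod measurableSet_Ioo

/-- Lebesgue measure, as a measure on parabolic space-time. -/
noncomputable def parVol (n : ℕ) : Measure (EuclideanSpace ℝ (Fin n) × SnowLine) :=
  (volume : Measure (EuclideanSpace ℝ (Fin n) × ℝ)).map (toParabolic n)

lemma parVol_apply (n : ℕ) (s : Set (EuclideanSpace ℝ (Fin n) × SnowLine)) :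
    parVol n s = volume (toParabolic n ⁻¹' s) :=
  (toParabolic n).toMeasurableEquiv.map_apply s

lemma parVol_closedBall (n : ℕ) (z : EuclideanSpace ℝ (Fin n) × SnowLine) (r : ℝ) (hr : 0 < r) :
    parVol n (Metric.closedBall z r) = 2 * (ENNReal.ofReal (r ^ (n + 2)) *
        volume (Metric.ball (0 : EuclideanSpace ℝ (Fin n)) 1)) := by
  obtain ⟨⟨x, t⟩, rfl⟩ := (toParabolic n).surjective z
  rw [parVol_apply, toParabolic_preimage_closedBall n x t r hr.le, volume_closed_cyl n x t r hr]

instance parVol_doubling (n : ℕ) : IsUnifLocDoublingMeasure (parVol n) := by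
  refine ⟨⟨2 ^ (n + 2), ?_⟩⟩
  filter_upwards [self_mem_nhdsWithin] with ε (hε : 0 < ε) z
  rw [parVol_closedBall n z ε hε, parVol_closedBall n z (2 * ε) (by positivity), mul_pow,
    ENNReal.ofReal_mul (by positivity), ENNReal.ofReal_pow (by norm_num), ENNReal.ofReal_ofNat]
  push_cast
  apply le_of_eq
  ring

instance parVol_locallyFinite (n : ℕ) : IsLocallyFiniteMeasure (parVol n) := by
  refine ⟨fun z => ⟨Metric.closedBall z 1, Metric.closedBall_mem_nhds z one_pos, ?_⟩⟩
  rw [parVol_closedBall n z 1 one_pos]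
  exact (ENNReal.mul_ne_top (by norm_num)
    (ENNReal.mul_ne_top ENNReal.ofReal_ne_top measure_ball_lt_top.ne)).lt_top

/-- Density points for backward parabolic cylinders. -/
lemma ae_density (n : ℕ) (X : Set (EuclideanSpace ℝ (Fin n) × ℝ)) (hX : MeasurableSet X)
    (δ : ℝ) (hδ0 : 0 < δ) (hδ : δ < 1) :
    ∀ᵐ z : EuclideanSpace ℝ (Fin n) × ℝ, z ∈ X → ∀ᶠ ρ in nhdsWithin (0 : ℝ) (Ioi 0),
      ENNReal.ofReal δ * volume (parabolicCylinder n z.1 z.2 ρ) ≤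
        volume (X ∩ parabolicCylinder n z.1 z.2 ρ) := by
  have h1 := IsUnifLocDoublingMeasure.ae_tendsto_measure_inter_div (parVol n)
    ((toParabolic n).symm ⁻¹' X) 1
  rw [ae_restrict_iff' ((toParabolic n).symm.measurable hX)] at h1
  have h2 := ae_of_ae_map (toParabolic n).measurable.aemeasurable h1
  filter_upwards [h2] with z hz hzX
  have h3 := hz (by simpa using hzX) (l := nhdsWithin (0 : ℝ) (Ioi 0))
    (fun _ => toParabolic n z) id Filter.tendsto_id (by
      filter_upwards [self_mem_nhdsWithin] with ρ hρ
      have : (0 : ℝ) < ρ := hρ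
      exact Metric.mem_closedBall_self (by simpa using this.le))
  have hlt : ENNReal.ofReal ((1 + δ) / 2) < 1 := by
    rw [ENNReal.ofReal_lt_one]; linarith
  filter_upwards [h3.eventually (lt_mem_nhds hlt), self_mem_nhdsWithin] with ρ h4 (hρ : 0 < ρ)
  obtain ⟨x, t⟩ := z
  simp only [id] at h4
  rw [parVol_apply, parVol_apply, preimage_inter, toParabolic_preimage_closedBall n x t ρ hρ.le,
    volume_closed_cyl n x t ρ hρ, ← preimage_comp, Homeomorph.symm_comp_self, preimage_id,
    ← volume_cyl n x t ρ hρ] at h4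
  set Q := parabolicCylinder n x t ρ with hQ
  set K := Metric.closedBall x ρ ×ˢ Icc (t - ρ ^ 2) (t + ρ ^ 2) with hK
  have hQK : Q ⊆ K := by
    apply prod_mono Metric.ball_subset_closedBall
    intro s hs
    exact ⟨hs.1.le, by nlinarith [hs.2]⟩
  have hQtop : volume Q ≠ ∞ := volume_cyl_ne_top n x t ρ hρ
  have h5 : ENNReal.ofReal ((1 + δ) / 2) * (2 * volume Q) ≤ volume (X ∩ K) :=
    ENNReal.mul_le_of_le_div h4.le
  have h6 : volume (K \ Q) = volume Q := by
    rw [measure_sdiff hQK (measurableSet_cyl n x t ρ).nullMeasurableSet hQtop, hK,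
      volume_closed_cyl n x t ρ hρ, ← volume_cyl n x t ρ hρ, two_mul]
    exact ENNReal.add_sub_cancel_right hQtop
  have h7 : volume (X ∩ K) ≤ volume (X ∩ Q) + volume Q := by
    calc volume (X ∩ K) ≤ volume ((X ∩ Q) ∪ (K \ Q)) := by
          apply measure_mono
          rintro w ⟨hw1, hw2⟩
          by_cases h : w ∈ Q
          · exact Or.inl ⟨hw1, h⟩
          · exact Or.inr ⟨hw2, h⟩
      _ ≤ _ := (measure_union_le _ _).trans (by rw [h6])
  have h8 : ENNReal.ofReal ((1 + δ) / 2) * (2 * volume Q) =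
      ENNReal.ofReal δ * volume Q + volume Q := by
    have h9 : ENNReal.ofReal ((1 + δ) / 2) * 2 = ENNReal.ofReal (δ + 1) := by
      rw [show δ + 1 = (1 + δ) / 2 * 2 by ring, ENNReal.ofReal_mul (by positivity),
        ENNReal.ofReal_ofNat]
    rw [← mul_assoc, h9, ENNReal.ofReal_add hδ0.le zero_le_one, add_mul, ENNReal.ofReal_one, one_mul]
  rw [h8] at h5
  exact (ENNReal.add_le_add_iff_right hQtop).1 (h5.trans h7)

/-- A point touches a cylinder: it lies in the cylinder, up to the top and the bottom. -/
def Touches {n : ℕ} (z : EuclideanSpace ℝ (Fin n) × ℝ)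
    (a : EuclideanSpace ℝ (Fin n) × ℝ × ℝ) : Prop :=
  dist z.1 a.1 < a.2.2 ∧ a.2.1 - a.2.2 ^ 2 ≤ z.2 ∧ z.2 ≤ a.2.1

/-- Good cylinders: those which do not reach below the big cylinder and have large density. -/
def goodFamily (n : ℕ) (x₀ : EuclideanSpace ℝ (Fin n)) (t₀ R δ : ℝ)
    (X : Set (EuclideanSpace ℝ (Fin n) × ℝ)) : Set (EuclideanSpace ℝ (Fin n) × ℝ × ℝ) :=
  {a | (a.1, a.2.1) ∈ parabolicCylinder n x₀ t₀ R ∧ 0 < a.2.2 ∧ a.2.2 < R ∧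
    t₀ - R ^ 2 ≤ a.2.1 - a.2.2 ^ 2 ∧
    ENNReal.ofReal δ * volume (parabolicCylinder n a.1 a.2.1 a.2.2) ≤
      volume (X ∩ parabolicCylinder n a.1 a.2.1 a.2.2)}

/-- The enlarged cylinder. -/
def enlarged {n : ℕ} (a : EuclideanSpace ℝ (Fin n) × ℝ × ℝ) :
    Set (EuclideanSpace ℝ (Fin n) × ℝ) :=
  Metric.ball a.1 (5 * a.2.2) ×ˢ Ioo (a.2.1 - 5 * a.2.2 ^ 2) (a.2.1 + 4 * a.2.2 ^ 2)

lemma volume_cyl_five (n : ℕ) (x y : EuclideanSpace ℝ (Fin n)) (t s r : ℝ) (hr : 0 < r) :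
    volume (parabolicCylinder n x t (5 * r)) =
      5 ^ (n + 2) * volume (parabolicCylinder n y s r) := by
  rw [volume_cyl n x t _ (by positivity), volume_cyl n y s r hr, mul_pow,
    ENNReal.ofReal_mul (by positivity), ENNReal.ofReal_pow (by norm_num), ENNReal.ofReal_ofNat]
  ring

lemma enlarged_bound (n : ℕ) (x₀ : EuclideanSpace ℝ (Fin n)) (t₀ R δ : ℝ) (hδ : 0 < δ)
    (X : Set (EuclideanSpace ℝ (Fin n) × ℝ)) (hXQ : X ⊆ parabolicCylinder n x₀ t₀ R)
    (hR : 0 < R)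
    (hXδ : volume X < ENNReal.ofReal δ * volume (parabolicCylinder n x₀ t₀ R))
    (x : EuclideanSpace ℝ (Fin n)) (t ρ : ℝ) (ha : (x, t, ρ) ∈ goodFamily n x₀ t₀ R δ X)
    (z : EuclideanSpace ℝ (Fin n) × ℝ) (hz : z ∈ X) (hza : Touches z (x, t, ρ))
    (hmax : ∀ b ∈ goodFamily n x₀ t₀ R δ X, Touches z b → b.2.2 ≤ 2 * ρ) :
    volume (X ∩ enlarged (x, t, ρ)) ≤
      2 * (ENNReal.ofReal δ * (5 ^ (n + 2) * volume (parabolicCylinder n x t ρ))) := by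
  obtain ⟨ha1, hρ, hρR, hbot, -⟩ := ha
  simp only at ha1 hρ hρR hbot
  obtain ⟨ζ, τ⟩ := z
  obtain ⟨hz1, hz2, hz3⟩ := hza
  simp only at hz1 hz2 hz3
  have hzQ := hXQ hz
  rw [parabolicCylinder, mem_prod] at hzQ ha1
  obtain ⟨-, hτ1, hτ2⟩ := hzQ
  obtain ⟨hx, ht1, ht2⟩ := ha1
  simp only at hτ1 hτ2 hx ht1 ht2
  set r := 5 * ρ with hr
  have hr2 : r ^ 2 = 25 * ρ ^ 2 := by rw [hr]; ring
  have hr0 : 0 < r := by positivity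
  have hρ2 : 0 < ρ ^ 2 := by positivity
  rcases le_or_gt R r with hRr | hRr
  · calc volume (X ∩ enlarged (x, t, ρ)) ≤ volume X := measure_mono inter_subset_left
      _ ≤ ENNReal.ofReal δ * volume (parabolicCylinder n x₀ t₀ R) := hXδ.le
      _ ≤ ENNReal.ofReal δ * volume (parabolicCylinder n x t r) := by
          rw [volume_cyl n x₀ t₀ R hR, volume_cyl n x t r hr0]
          gcongr
      _ = ENNReal.ofReal δ * (5 ^ (n + 2) * volume (parabolicCylinder n x t ρ)) := by
          rw [volume_cyl_five n x x t t ρ hρ]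
      _ ≤ _ := by
          rw [two_mul]; exact le_self_add
  · have hrR2 : r ^ 2 < R ^ 2 := by nlinarith
    set η := min (δ * r ^ 2) (t₀ - τ) with hη
    have hη0 : 0 < η := lt_min (by positivity) (by linarith)
    have hη1 : η ≤ δ * r ^ 2 := min_le_left _ _
    have hη2 : η ≤ t₀ - τ := min_le_right _ _
    set m := min (t + 4 * ρ ^ 2) (t₀ - η) with hm
    have hm1 : m ≤ t + 4 * ρ ^ 2 := min_le_left _ _
    have hm2 : m ≤ t₀ - η := min_le_right _ _
    have hm3 : τ ≤ m := le_min (by linarith) (by linarith)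
    set t' := max (t₀ - R ^ 2 + r ^ 2) m with ht'
    have h1 : t₀ - R ^ 2 + r ^ 2 ≤ t' := le_max_left _ _
    have h2 : m ≤ t' := le_max_right _ _
    have h3 : t' < t₀ := max_lt (by linarith) (by linarith)
    have hng : (x, t', r) ∉ goodFamily n x₀ t₀ R δ X := by
      intro hg
      have := hmax _ hg ⟨by simp only; linarith, ?_, by simp only; linarith⟩
      · simp only at this; linarith
      · simp only
        rcases max_choice (t₀ - R ^ 2 + r ^ 2) m with h | h <;> rw [← ht'] at h <;> linarith
    have hlt : volume (X ∩ parabolicCylinder n x t' r) ≤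
        ENNReal.ofReal δ * volume (parabolicCylinder n x t' r) := by
      by_contra hcon
      refine hng ⟨?_, hr0, hRr, by simp only; linarith, (not_le.1 hcon).le⟩
      rw [parabolicCylinder, mem_prod]
      exact ⟨hx, by simp only; nlinarith, h3⟩
    have hsub : X ∩ enlarged (x, t, ρ) ⊆ (X ∩ parabolicCylinder n x t' r) ∪
        (Metric.ball x r ×ˢ Ico (t₀ - δ * r ^ 2) t₀) := by
      rintro ⟨y, s⟩ ⟨hyX, hyE⟩
      rw [enlarged, mem_prod] at hyE
      obtain ⟨hy, hs1, hs2⟩ := hyE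
      simp only at hy hs1 hs2
      have hyQ := hXQ hyX
      rw [parabolicCylinder, mem_prod] at hyQ
      obtain ⟨-, hs3, hs4⟩ := hyQ
      simp only at hs3 hs4
      rcases lt_or_ge s t' with hs | hs
      · left
        refine ⟨hyX, ?_⟩
        rw [parabolicCylinder, mem_prod]
        refine ⟨hy, ?_, hs⟩
        simp only
        rcases max_choice (t₀ - R ^ 2 + r ^ 2) m with h | h <;> rw [← ht'] at h <;> linarith
      · right
        rw [mem_prod]
        refine ⟨hy, ?_, hs4⟩
        simp only
        rcases min_choice (t + 4 * ρ ^ 2) (t₀ - η) with h | h <;> rw [← hm] at h <;> linarith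
    have hstrip : volume (Metric.ball x r ×ˢ Ico (t₀ - δ * r ^ 2) t₀) =
        ENNReal.ofReal δ * volume (parabolicCylinder n x t' r) := by
      rw [volume_cyl n x t' r hr0, Measure.volume_eq_prod, Measure.prod_prod,
        Measure.addHaar_ball_of_pos _ _ hr0, Real.volume_Ico, finrank_euclideanSpace_fin, pow_add,
        ENNReal.ofReal_mul (by positivity), show t₀ - (t₀ - δ * r ^ 2) = δ * r ^ 2 by ring,
        ENNReal.ofReal_mul hδ.le]
      ring
    calc volume (X ∩ enlarged (x, t, ρ)) ≤ _ := measure_mono hsub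
      _ ≤ _ := measure_union_le _ _
      _ ≤ ENNReal.ofReal δ * volume (parabolicCylinder n x t' r) +
          ENNReal.ofReal δ * volume (parabolicCylinder n x t' r) := by
          rw [hstrip]; gcongr
      _ = _ := by rw [← two_mul, volume_cyl_five n x x t' t ρ hρ]

lemma volume_inter_lower (n : ℕ) (x₀ : EuclideanSpace ℝ (Fin n)) (t₀ R δ : ℝ) (hR : 0 < R)
    (X : Set (EuclideanSpace ℝ (Fin n) × ℝ))
    (x : EuclideanSpace ℝ (Fin n)) (t ρ : ℝ) (ha : (x, t, ρ) ∈ goodFamily n x₀ t₀ R δ X) :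
    volume (parabolicCylinder n x t ρ) ≤
      2 ^ n * volume (parabolicCylinder n x t ρ ∩ parabolicCylinder n x₀ t₀ R) := by
  obtain ⟨ha1, hρ, hρR, hbot, -⟩ := ha
  simp only at ha1 hρ hρR hbot
  rw [parabolicCylinder, mem_prod] at ha1
  obtain ⟨hx, ht1, ht2⟩ := ha1
  simp only [Metric.mem_ball, dist_eq_norm] at ht1 ht2 hx
  set k := ρ / (2 * R) with hk
  have hkR : k * R = ρ / 2 := by rw [hk]; field_simp
  have hk0 : 0 < k := by positivity
  have hk1 : k < 1 := by rw [hk, div_lt_one (by positivity)]; linarith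
  set y := x + k • (x₀ - x) with hy
  have hyx : dist y x ≤ ρ / 2 := by
    rw [dist_eq_norm, hy, add_sub_cancel_left, norm_smul, Real.norm_of_nonneg hk0.le,
      norm_sub_rev]
    nlinarith
  have hyx0 : dist y x₀ ≤ R - ρ / 2 := by
    rw [dist_eq_norm, hy, show x + k • (x₀ - x) - x₀ = (1 - k) • (x - x₀) by module, norm_smul,
      Real.norm_of_nonneg (by linarith)]
    nlinarith
  have hsub : Metric.ball y (ρ / 2) ×ˢ Ioo (t - ρ ^ 2) t ⊆
      parabolicCylinder n x t ρ ∩ parabolicCylinder n x₀ t₀ R := by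
    apply subset_inter
    · exact prod_mono (Metric.ball_subset_ball' (by linarith)) subset_rfl
    · exact prod_mono (Metric.ball_subset_ball' (by linarith)) (Ioo_subset_Ioo hbot ht2.le)
  have hvol : volume (parabolicCylinder n x t ρ) =
      2 ^ n * volume (Metric.ball y (ρ / 2) ×ˢ Ioo (t - ρ ^ 2) t) := by
    rw [parabolicCylinder, Measure.volume_eq_prod, Measure.prod_prod, Measure.prod_prod,
      show Metric.ball x ρ = Metric.ball x (2 * (ρ / 2)) by congr 1; ring,
      Measure.addHaar_ball_mul_of_pos _ _ two_pos, Measure.addHaar_ball_center _ y,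
      finrank_euclideanSpace_fin, ENNReal.ofReal_pow (by norm_num), ENNReal.ofReal_ofNat]
    ring
  rw [hvol]
  gcongr


theorem parabolic_covering_lemma (n : ℕ) (hn : 2 ≤ n) :
    ∃ c₃ : ℝ, 0 < c₃ ∧
      ∀ (x₀ : EuclideanSpace ℝ (Fin n)) (t₀ R : ℝ), 0 < R →
      ∀ X Y : Set (EuclideanSpace ℝ (Fin n) × ℝ),
        MeasurableSet X → MeasurableSet Y →
        X ⊆ Y → Y ⊆ parabolicCylinder n x₀ t₀ R →
      ∀ δ : ℝ, 0 < δ → δ < 1 →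
        volume X < ENNReal.ofReal δ * volume (parabolicCylinder n x₀ t₀ R) →
        (∀ (x : EuclideanSpace ℝ (Fin n)) (t : ℝ), (x, t) ∈ parabolicCylinder n x₀ t₀ R →
          ∀ ρ : ℝ, 0 < ρ → ρ ≤ R →
            ENNReal.ofReal δ * volume (parabolicCylinder n x t ρ) ≤
              volume (X ∩ parabolicCylinder n x t ρ) →
            parabolicCylinder n x t ρ ∩ parabolicCylinder n x₀ t₀ R ⊆ Y) →
        volume X ≤ ENNReal.ofReal (c₃ * δ) * volume Y := by
  refine ⟨2 * 5 ^ (n + 2) * 2 ^ n, by positivity, ?_⟩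
  intro x₀ t₀ R hR X Y hX hY hXY hYQ δ hδ hδ1 hXδ hcov
  have hXQ := hXY.trans hYQ
  set F := goodFamily n x₀ t₀ R δ X with hF
  set F' : Set (EuclideanSpace ℝ (Fin n) × ℝ × ℝ) :=
    {a | a ∈ F ∧ ∃ z ∈ X, Touches z a ∧ ∀ b ∈ F, Touches z b → b.2.2 ≤ 2 * a.2.2} with hF'
  have hpos : ∀ a ∈ F', 0 < a.2.2 := fun a ha => ha.1.2.1
  have hae : ∀ᵐ z : EuclideanSpace ℝ (Fin n) × ℝ, z ∈ X → ∃ a ∈ F', Touches z a := by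
    filter_upwards [ae_density n X hX δ hδ hδ1] with z hz hzX
    have hd := hz hzX
    have hzQ := hXQ hzX
    have hzQ' := hzQ
    rw [parabolicCylinder, mem_prod] at hzQ'
    obtain ⟨-, hz1, hz2⟩ := hzQ'
    have e1 : ∀ᶠ ρ in nhdsWithin (0 : ℝ) (Ioi 0), ρ < R :=
      nhdsWithin_le_nhds (gt_mem_nhds hR)
    have e2 : ∀ᶠ ρ in nhdsWithin (0 : ℝ) (Ioi 0), ρ ^ 2 < z.2 - (t₀ - R ^ 2) := by
      have : Filter.Tendsto (fun ρ : ℝ => ρ ^ 2) (nhds 0) (nhds (0 ^ 2)) :=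
        (continuous_pow 2).tendsto 0
      apply nhdsWithin_le_nhds
      apply this.eventually_lt_const
      simp only [ne_eq, OfNat.ofNat_ne_zero, not_false_eq_true, zero_pow]
      linarith
    obtain ⟨ρ, ⟨⟨h1, h2⟩, h3⟩, h4⟩ :=
      (((hd.and e1).and e2).and (self_mem_nhdsWithin (a := (0 : ℝ)) (s := Ioi 0))).exists
    have h4 : 0 < ρ := h4
    have hmem : (z.1, z.2, ρ) ∈ F :=
      ⟨hzQ, h4, h2, by simp only; linarith, h1⟩
    have htouch : Touches z (z.1, z.2, ρ) :=
      ⟨by simpa using h4, by simp only; nlinarith, le_refl _⟩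
    set S : Set ℝ := (fun a : EuclideanSpace ℝ (Fin n) × ℝ × ℝ => a.2.2) ''
      {a | a ∈ F ∧ Touches z a} with hS
    have hSne : S.Nonempty := ⟨ρ, _, ⟨hmem, htouch⟩, rfl⟩
    have hSbdd : BddAbove S := by
      refine ⟨R, ?_⟩
      rintro _ ⟨a, ha, rfl⟩
      exact ha.1.2.2.1.le
    have hSpos : 0 < sSup S := h4.trans_le (le_csSup hSbdd ⟨_, ⟨hmem, htouch⟩, rfl⟩)
    obtain ⟨_, ⟨a, ha, rfl⟩, ha2⟩ := exists_lt_of_lt_csSup hSne (half_lt_self hSpos)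
    refine ⟨a, ⟨ha.1, z, hzX, ha.2, ?_⟩, ha.2⟩
    intro b hb hzb
    have := le_csSup hSbdd ⟨b, ⟨hb, hzb⟩, rfl⟩
    simp only at ha2 this
    linarith
  let B : EuclideanSpace ℝ (Fin n) × ℝ × ℝ → Set (EuclideanSpace ℝ (Fin n) × ℝ) :=
    fun a => parabolicCylinder n a.1 a.2.1 a.2.2
  have hBne : ∀ a ∈ F', (B a).Nonempty := by
    intro a ha
    have := hpos a ha
    refine ⟨(a.1, a.2.1 - a.2.2 ^ 2 / 2), ?_⟩
    simp only [B, parabolicCylinder, mem_prod]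
    exact ⟨Metric.mem_ball_self this, by nlinarith, by nlinarith⟩
  obtain ⟨u, huF, hudisj, hu⟩ := Vitali.exists_disjoint_subfamily_covering_enlargement B F'
    (fun a => a.2.2) 2 one_lt_two (fun a ha => (hpos a ha).le) R (fun a ha => ha.1.2.2.1.le) hBne
  have hucount : u.Countable :=
    hudisj.countable_of_isOpen (fun a _ => Metric.isOpen_ball.prod isOpen_Ioo)
      (fun a ha => hBne a (huF ha))
  have hcover : ∀ᵐ z : EuclideanSpace ℝ (Fin n) × ℝ, z ∈ X → z ∈ ⋃ b ∈ u, X ∩ enlarged b := by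
    filter_upwards [hae] with z hz hzX
    obtain ⟨a, ha, hza1, hza2, hza3⟩ := hz hzX
    obtain ⟨b, hb, ⟨⟨y, s⟩, hya, hyb⟩, hab⟩ := hu a ha
    have hbpos := hpos b (huF hb)
    have hapos := hpos a ha
    simp only [B, parabolicCylinder, mem_prod, Metric.mem_ball, mem_Ioo] at hya hyb
    obtain ⟨hya1, hya2, hya3⟩ := hya
    obtain ⟨hyb1, hyb2, hyb3⟩ := hyb
    have hsq : a.2.2 ^ 2 ≤ 4 * b.2.2 ^ 2 := by nlinarith
    simp only [mem_iUnion]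
    refine ⟨b, hb, hzX, ?_⟩
    rw [enlarged, mem_prod]
    refine ⟨?_, ?_, ?_⟩
    · rw [Metric.mem_ball]
      have t1 := dist_triangle z.1 a.1 b.1
      have t2 := dist_triangle a.1 y b.1
      rw [dist_comm a.1 y] at t2
      linarith
    · linarith
    · linarith
  have hbound : ∀ b ∈ u, volume (X ∩ enlarged b) ≤
      ENNReal.ofReal (2 * 5 ^ (n + 2) * 2 ^ n * δ) *
        volume (B b ∩ parabolicCylinder n x₀ t₀ R) := by
    rintro ⟨x, t, ρ⟩ hb
    obtain ⟨hbF, z, hz, hzb, hmax⟩ := huF hb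
    refine (enlarged_bound n x₀ t₀ R δ hδ X hXQ hR hXδ x t ρ hbF z hz hzb hmax).trans ?_
    calc _ ≤ 2 * (ENNReal.ofReal δ * (5 ^ (n + 2) *
          (2 ^ n * volume (parabolicCylinder n x t ρ ∩ parabolicCylinder n x₀ t₀ R)))) := by
          gcongr
          exact volume_inter_lower n x₀ t₀ R δ hR X x t ρ hbF
      _ = _ := by
          rw [ENNReal.ofReal_mul (by positivity), ENNReal.ofReal_mul (by positivity),
            ENNReal.ofReal_mul (by positivity), ENNReal.ofReal_pow (by norm_num),
            ENNReal.ofReal_pow (by norm_num), ENNReal.ofReal_ofNat, ENNReal.ofReal_ofNat]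
          ring
  have : Countable u := hucount.to_subtype
  calc volume X ≤ volume (⋃ b ∈ u, X ∩ enlarged b) := measure_mono_ae hcover
    _ ≤ ∑' b : u, volume (X ∩ enlarged (b : EuclideanSpace ℝ (Fin n) × ℝ × ℝ)) :=
        measure_biUnion_le _ hucount _
    _ ≤ ∑' b : u, ENNReal.ofReal (2 * 5 ^ (n + 2) * 2 ^ n * δ) *
        volume (B b ∩ parabolicCylinder n x₀ t₀ R) :=
        ENNReal.tsum_le_tsum fun b => hbound b b.2
    _ = ENNReal.ofReal (2 * 5 ^ (n + 2) * 2 ^ n * δ) *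
        volume (⋃ b ∈ u, B b ∩ parabolicCylinder n x₀ t₀ R) := by
        rw [ENNReal.tsum_mul_left, measure_biUnion hucount]
        · exact hudisj.mono fun a => inter_subset_left
        · exact fun b _ => (measurableSet_cyl n _ _ _).inter (measurableSet_cyl n _ _ _)
    _ ≤ ENNReal.ofReal (2 * 5 ^ (n + 2) * 2 ^ n * δ) * volume Y := by
        gcongr
        refine iUnion₂_subset fun b hb => ?_
        have hg := (huF hb).1
        exact hcov b.1 b.2.1 hg.1 b.2.2 hg.2.1 hg.2.2.1.le hg.2.2.2.2
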